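/- Let α, β ≥ -1/2, let k₀ ≥ 1 be an integer and let 0 ≤ k ≤ k₀ be an integer; if α+β = -1 assume additionally k ≥ 1. Define S_k^{α,β}(θ,φ) = ∫₀^∞ ∂_t^{2k} H_t^{α,β}(θ,φ) · t^{2k₀-1} dt. There exists a constant C depending only on α, β, k, k₀ such that |∂_θ S_k^{α,β}(θ,φ)| + |∂_φ S_k^{α,β}(θ,φ)| ≤ C / ( |θ-φ| · μ_{α,β}^+(B(θ, |θ-φ|)) ) for all θ, φ ∈ (0,π) with θ ≠ φ. -/

import Mathlib

open MeasureTheory Real Set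

noncomputable section

/-- The Jacobi measure `μ_{α,β}^+` on `(0,π)`: density
`(sin(θ/2))^(2α+1) (cos(θ/2))^(2β+1)` w.r.t. Lebesgue measure on `(0,π)`. -/
def jacobiMeasure (α β : ℝ) : Measure ℝ :=
  (volume.restrict (Ioo 0 π)).withDensity
    (fun θ => ENNReal.ofReal (Real.sin (θ / 2) ^ (2 * α + 1) * Real.cos (θ / 2) ^ (2 * β + 1)))

/-- The ball `B(θ,r) = (θ-r, θ+r) ∩ (0,π)`. -/
def jacobiBall (θ r : ℝ) : Set ℝ := Ioo (θ - r) (θ + r) ∩ Ioo 0 π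

/-- The measure `Π_α` on `[-1,1]`. -/
def PiMeasure (α : ℝ) : Measure ℝ :=
  if α = -(1 / 2) then (2 : ENNReal)⁻¹ • (Measure.dirac (-1) + Measure.dirac 1)
  else
    (volume.restrict (Icc (-1) 1)).withDensity
      (fun u => ENNReal.ofReal
        (Real.Gamma (α + 1) / (Real.sqrt π * Real.Gamma (α + 1 / 2)) * (1 - u ^ 2) ^ (α - 1 / 2)))

/-- `q(θ,φ,u,v) = 1 - u sin(θ/2) sin(φ/2) - v cos(θ/2) cos(φ/2)`. -/
def qfun (θ φ u v : ℝ) : ℝ :=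
  1 - u * Real.sin (θ / 2) * Real.sin (φ / 2) - v * Real.cos (θ / 2) * Real.cos (φ / 2)

/-- `Ψ^{α,β}(t,s) = sinh(t/2) / (cosh(t/2) - 1 + s)^(α+β+2)`. -/
def Psi (α β t s : ℝ) : ℝ :=
  Real.sinh (t / 2) / (Real.cosh (t / 2) - 1 + s) ^ (α + β + 2)

/-- The Jacobi-Poisson kernel `H_t^{α,β}(θ,φ)`. -/
def Hker (α β t θ φ : ℝ) : ℝ :=
  ((2 : ℝ) ^ (-(α + β + 2)) / (jacobiMeasure α β (Ioo 0 π)).toReal) * Real.sinh (t / 2) *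
    ∫ u, ∫ v, 1 / (Real.cosh (t / 2) - 1 + qfun θ φ u v) ^ (α + β + 2)
      ∂(PiMeasure β) ∂(PiMeasure α)

/-- The symmetrized kernel `H̃_t^{α,β}(θ,φ) = (1/4) sin θ sin φ H_t^{α+1,β+1}(θ,φ)`. -/
def Htilde (α β t θ φ : ℝ) : ℝ :=
  (1 / 4) * Real.sin θ * Real.sin φ * Hker (α + 1) (β + 1) t θ φ

end


open MeasureTheory Real Set

noncomputable section

/-- The denominator. -/
def Dd (t s : ℝ) : ℝ := Real.cosh (t / 2) - 1 + s

inductive Cls : ℝ → ℝ → (ℝ → ℝ → ℝ) → Prop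
  | term (p e c : ℝ) (a b : ℕ) (τ : ℝ)
      (h : c = 0 ∨ (τ - a / 2 ≤ p ∧ a + b - τ ≤ e)) :
      Cls p e (fun t s => c * Real.sinh (t / 2) ^ a * Real.cosh (t / 2) ^ b * Dd t s ^ (-τ))
  | add (p e : ℝ) (F G : ℝ → ℝ → ℝ) (hF : Cls p e F) (hG : Cls p e G) :
      Cls p e (fun t s => F t s + G t s)

lemma le_Dd (t s : ℝ) : s ≤ Dd t s := by
  unfold Dd; linarith [Real.one_le_cosh (t / 2)]

lemma Dd_pos {t s : ℝ} (hs : 0 < s) : 0 < Dd t s := lt_of_lt_of_le hs (le_Dd t s)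

lemma hasDerivAt_sinh_half (t : ℝ) :
    HasDerivAt (fun t : ℝ => Real.sinh (t / 2)) (Real.cosh (t / 2) / 2) t := by
  have := (Real.hasDerivAt_sinh (t / 2)).comp t ((hasDerivAt_id t).div_const 2)
  simpa [Function.comp_def, div_eq_mul_inv] using this

lemma hasDerivAt_cosh_half (t : ℝ) :
    HasDerivAt (fun t : ℝ => Real.cosh (t / 2)) (Real.sinh (t / 2) / 2) t := by
  have := (Real.hasDerivAt_cosh (t / 2)).comp t ((hasDerivAt_id t).div_const 2)
  simpa [Function.comp_def, div_eq_mul_inv] using this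

lemma hasDerivAt_Dd (t s : ℝ) :
    HasDerivAt (fun t : ℝ => Dd t s) (Real.sinh (t / 2) / 2) t := by
  unfold Dd
  exact ((hasDerivAt_cosh_half t).sub_const 1).add_const s

lemma hasDerivAt_Dd_s (t s : ℝ) :
    HasDerivAt (fun s : ℝ => Dd t s) 1 s := by
  unfold Dd
  exact (hasDerivAt_id s).const_add _

lemma Cls.derivT {p e : ℝ} {F : ℝ → ℝ → ℝ} (h : Cls p e F) :
    ∃ F', Cls (p + 1 / 2) e F' ∧
      ∀ t s, 0 < s → HasDerivAt (fun t => F t s) (F' t s) t := by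
  induction h with
  | add F G hF hG ihF ihG =>
    obtain ⟨F', h1, h2⟩ := ihF
    obtain ⟨G', h3, h4⟩ := ihG
    exact ⟨_, Cls.add _ _ _ _ h1 h3, fun t s hs => (h2 t s hs).add (h4 t s hs)⟩
  | term c a b τ h =>
    refine ⟨_, Cls.add _ _ _ _ (Cls.add _ _ _ _
      (Cls.term (p + 1 / 2) e (c * a / 2) (a - 1) (b + 1) τ ?_)
      (Cls.term (p + 1 / 2) e (c * b / 2) (a + 1) (b - 1) τ ?_))
      (Cls.term (p + 1 / 2) e (-(c * τ / 2)) (a + 1) b (τ + 1) ?_), ?_⟩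
    · rcases h with h | ⟨h1, h2⟩
      · left; simp [h]
      · rcases a with _ | a
        · left; simp
        · right; push_cast at *
          constructor <;> linarith
    · rcases h with h | ⟨h1, h2⟩
      · left; simp [h]
      · rcases b with _ | b
        · left; simp
        · right; push_cast at *
          constructor <;> linarith
    · rcases h with h | ⟨h1, h2⟩
      · left; simp [h]
      · right; push_cast; constructor <;> linarith
    · intro t s hs
      have hD := (hasDerivAt_Dd t s).rpow_const (p := -τ) (Or.inl (Dd_pos hs).ne')
      have hS := (hasDerivAt_sinh_half t).pow a
      have hC := (hasDerivAt_cosh_half t).pow b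
      refine (((hS.const_mul c).mul hC).mul hD).congr_deriv ?_
      rw [show -(τ + 1) = -τ - 1 by ring]
      simp only [Pi.pow_apply, Pi.mul_apply]
      ring

lemma Cls.derivS {p e : ℝ} {F : ℝ → ℝ → ℝ} (h : Cls p e F) :
    ∃ F', Cls (p + 1) (e - 1) F' ∧
      ∀ t s, 0 < s → HasDerivAt (fun s => F t s) (F' t s) s := by
  induction h with
  | add F G hF hG ihF ihG =>
    obtain ⟨F', h1, h2⟩ := ihF
    obtain ⟨G', h3, h4⟩ := ihG
    exact ⟨_, Cls.add _ _ _ _ h1 h3, fun t s hs => (h2 t s hs).add (h4 t s hs)⟩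
  | term c a b τ h =>
    refine ⟨_, Cls.term (p + 1) (e - 1) (-(c * τ)) a b (τ + 1) ?_, ?_⟩
    · rcases h with h | ⟨h1, h2⟩
      · left; simp [h]
      · right; constructor <;> linarith
    · intro t s hs
      have hD := (hasDerivAt_Dd_s t s).rpow_const (p := -τ) (Or.inl (Dd_pos hs).ne')
      refine (hD.const_mul (c * Real.sinh (t / 2) ^ a * Real.cosh (t / 2) ^ b)).congr_deriv ?_
      rw [show -(τ + 1) = -τ - 1 by ring]
      ring

lemma Cls.cont {p e : ℝ} {F : ℝ → ℝ → ℝ} (h : Cls p e F) :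
    ContinuousOn (fun x : ℝ × ℝ => F x.1 x.2) (univ ×ˢ Ioi 0) := by
  induction h with
  | add F G hF hG ihF ihG => exact ihF.add ihG
  | term c a b τ h =>
    apply ContinuousOn.mul
    · fun_prop
    · apply ContinuousOn.rpow_const
      · unfold Dd; fun_prop
      · intro x hx; left; exact (Dd_pos hx.2).ne'

lemma Cls.bound {p e : ℝ} {F : ℝ → ℝ → ℝ} (h : Cls p e F) :
    ∃ K, 0 ≤ K ∧ ∀ t s, 0 < s →
      |F t s| ≤ K * (Dd t s ^ (-p) * (1 + Dd t s) ^ (p + e)) := by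
  induction h with
  | add F G hF hG ihF ihG =>
    obtain ⟨K, hK, h2⟩ := ihF
    obtain ⟨K', hK', h4⟩ := ihG
    refine ⟨K + K', by positivity, fun t s hs => ?_⟩
    rw [add_mul]
    exact (abs_add_le _ _).trans (add_le_add (h2 t s hs) (h4 t s hs))
  | term c a b τ h =>
    rcases h with h | ⟨h1, h2⟩
    · refine ⟨0, le_rfl, fun t s hs => by simp [h]⟩
    refine ⟨|c| * (2 : ℝ) ^ ((a : ℝ) / 2), by positivity, fun t s hs => ?_⟩
    set D := Dd t s with hD
    have hDp : 0 < D := Dd_pos hs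
    have hC1 := Real.one_le_cosh (t / 2)
    have hC : Real.cosh (t / 2) ≤ 1 + D := by rw [hD]; unfold Dd; linarith
    have hS2 : Real.sinh (t / 2) ^ 2 ≤ 2 * (D * (1 + D)) := by
      have := Real.cosh_sq (t / 2)
      have h3 : Real.cosh (t / 2) - 1 ≤ D := by rw [hD]; unfold Dd; linarith
      nlinarith
    have hS : |Real.sinh (t / 2)| ^ a ≤ (2 : ℝ) ^ ((a : ℝ) / 2) * (D ^ ((a : ℝ) / 2) * (1 + D) ^ ((a : ℝ) / 2)) := by
      rw [← Real.mul_rpow hDp.le (by linarith), ← Real.mul_rpow (by norm_num) (by positivity)]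
      calc |Real.sinh (t / 2)| ^ a = (Real.sinh (t / 2) ^ 2) ^ ((a : ℝ) / 2) := by
            rw [← sq_abs, ← Real.rpow_natCast (|Real.sinh (t / 2)|) 2, ← Real.rpow_mul (abs_nonneg _), ← Real.rpow_natCast]
            congr 1; push_cast; ring
        _ ≤ _ := Real.rpow_le_rpow (sq_nonneg _) hS2 (by positivity)
    have hCb : |Real.cosh (t / 2)| ^ b ≤ (1 + D) ^ (b : ℝ) := by
      rw [abs_of_pos (by linarith), Real.rpow_natCast]
      exact pow_le_pow_left₀ (by linarith) hC b
    rw [abs_mul, abs_mul, abs_mul, abs_pow, abs_pow, abs_of_pos (Real.rpow_pos_of_pos hDp _)]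
    have h1D : 0 < 1 + D := by linarith
    calc |c| * |Real.sinh (t / 2)| ^ a * |Real.cosh (t / 2)| ^ b * D ^ (-τ)
        ≤ |c| * ((2 : ℝ) ^ ((a : ℝ) / 2) * (D ^ ((a : ℝ) / 2) * (1 + D) ^ ((a : ℝ) / 2))) * (1 + D) ^ (b : ℝ) * D ^ (-τ) := by
          gcongr
      _ = |c| * (2 : ℝ) ^ ((a : ℝ) / 2) * (D ^ (-(τ - a / 2)) * (1 + D) ^ ((a : ℝ) / 2 + b)) := by
          rw [Real.rpow_add h1D, show -(τ - (a : ℝ) / 2) = a / 2 + -τ by ring, Real.rpow_add hDp]; ring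
      _ ≤ _ := by
          apply mul_le_mul_of_nonneg_left _ (by positivity)
          have e1 : D ^ (-(τ - (a : ℝ) / 2)) = D ^ (-p) * D ^ (p - (τ - a / 2)) := by
            rw [← Real.rpow_add hDp]; congr 1; ring
          rw [e1, mul_assoc]
          apply mul_le_mul_of_nonneg_left _ (by positivity)
          calc D ^ (p - (τ - (a : ℝ) / 2)) * (1 + D) ^ ((a : ℝ) / 2 + b)
              ≤ (1 + D) ^ (p - (τ - (a : ℝ) / 2)) * (1 + D) ^ ((a : ℝ) / 2 + b) := by
                gcongr
                linarith
            _ = (1 + D) ^ (p - (τ - (a : ℝ) / 2) + ((a : ℝ) / 2 + b)) := by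
                rw [← Real.rpow_add h1D]
            _ ≤ _ := by
                apply Real.rpow_le_rpow_of_exponent_le <;> linarith

end

open MeasureTheory Real Set

lemma PiMeasure_ae (α : ℝ) : ∀ᵐ u ∂(PiMeasure α), u ∈ Icc (-1 : ℝ) 1 := by
  unfold PiMeasure
  split_ifs with h
  · apply Measure.ae_smul_measure
    rw [ae_add_measure_iff]
    constructor
    · exact (ae_dirac_iff (p := fun x => x ∈ Icc (-1 : ℝ) 1) measurableSet_Icc).2 (by norm_num)
    · exact (ae_dirac_iff (p := fun x => x ∈ Icc (-1 : ℝ) 1) measurableSet_Icc).2 (by norm_num)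
  · apply (withDensity_absolutelyContinuous _ _).ae_le
    exact ae_restrict_mem measurableSet_Icc

/-- power integral near zero -/
lemma lint_pow_small {a w : ℝ} (ha : 0 < a) (hw : 0 ≤ w) :
    ∫⁻ x in Ioc 0 w, ENNReal.ofReal (x ^ (a - 1)) = ENNReal.ofReal (w ^ a / a) := by
  rw [← ofReal_integral_eq_lintegral_ofReal]
  · rw [← intervalIntegral.integral_of_le hw, integral_rpow (Or.inl (by linarith))]
    simp [Real.zero_rpow ha.ne']
  · apply (intervalIntegrable_iff_integrableOn_Ioc_of_le hw).1
    exact intervalIntegral.intervalIntegrable_rpow' (by linarith)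
  · filter_upwards [ae_restrict_mem measurableSet_Ioc] with x hx
    exact Real.rpow_nonneg hx.1.le _

lemma lint_pow_large {b w : ℝ} (hb : 0 < b) (hw : 0 < w) :
    ∫⁻ x in Ioi w, ENNReal.ofReal (x ^ (-b - 1)) = ENNReal.ofReal (w ^ (-b) / b) := by
  rw [← ofReal_integral_eq_lintegral_ofReal]
  · rw [integral_Ioi_rpow_of_lt (by linarith) hw]
    congr 1
    rw [show -b - 1 + 1 = -b by ring]; rw [neg_div_neg_eq]
  · exact integrableOn_Ioi_rpow_of_lt (by linarith) hw
  · filter_upwards [ae_restrict_mem measurableSet_Ioi] with x hx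
    exact Real.rpow_nonneg (hw.trans hx).le _

lemma lint_core {a τ : ℝ} (ha : 0 < a) (hτ : a < τ) {Q A : ℝ} (hQ : 0 < Q) (hA : 0 ≤ A) :
    ∫⁻ x in Ioc (0 : ℝ) 1, ENNReal.ofReal (x ^ (a - 1) * (Q + A * x) ^ (-τ)) ≤
      ENNReal.ofReal ((1 / a + 1 / (τ - a)) * (Q ^ (a - τ) * (Q + A) ^ (-a))) := by
  set w := Q / (Q + A) with hw
  have hQA : 0 < Q + A := by linarith
  have hw0 : 0 < w := by positivity
  have hw1 : w ≤ 1 := by rw [hw, div_le_one hQA]; linarith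
  have e1 : Q ^ (-τ) * (w ^ a / a) = 1 / a * (Q ^ (a - τ) * (Q + A) ^ (-a)) := by
    rw [hw, Real.div_rpow hQ.le hQA.le, Real.rpow_neg hQA.le, show a - τ = a + -τ by ring,
      Real.rpow_add hQ]
    field_simp
  have e2 : (Q + A) ^ (-τ) * (w ^ (-(τ - a)) / (τ - a)) = 1 / (τ - a) * (Q ^ (a - τ) * (Q + A) ^ (-a)) := by
    rw [hw, Real.div_rpow hQ.le hQA.le, show -(τ - a) = a - τ by ring]
    have : (Q + A) ^ (-a) = (Q + A) ^ (-τ) / (Q + A) ^ (a - τ) := by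
      rw [← Real.rpow_sub hQA]; congr 1; ring
    rw [this]
    ring
  have : Ioc (0:ℝ) 1 ⊆ Ioc 0 w ∪ Ioi w := by
    intro x hx
    rcases le_or_gt x w with h | h
    · exact Or.inl ⟨hx.1, h⟩
    · exact Or.inr h
  have hτ0 : 0 ≤ τ := by linarith
  calc ∫⁻ x in Ioc (0 : ℝ) 1, ENNReal.ofReal (x ^ (a - 1) * (Q + A * x) ^ (-τ))
      = ∫⁻ x in Ioc (0 : ℝ) w ∪ Ioc w 1, ENNReal.ofReal (x ^ (a - 1) * (Q + A * x) ^ (-τ)) := by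
        rw [Ioc_union_Ioc_eq_Ioc hw0.le hw1]
    _ ≤ (∫⁻ x in Ioc (0 : ℝ) w, ENNReal.ofReal (x ^ (a - 1) * (Q + A * x) ^ (-τ))) +
        ∫⁻ x in Ioc w 1, ENNReal.ofReal (x ^ (a - 1) * (Q + A * x) ^ (-τ)) := lintegral_union_le _ _ _
    _ ≤ (∫⁻ x in Ioc (0 : ℝ) w, ENNReal.ofReal (Q ^ (-τ)) * ENNReal.ofReal (x ^ (a - 1))) +
        ∫⁻ x in Ioc w 1, ENNReal.ofReal ((Q + A) ^ (-τ)) * ENNReal.ofReal (x ^ (-(τ - a) - 1)) := by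
        apply add_le_add
        · apply setLIntegral_mono' measurableSet_Ioc
          intro x hx
          rw [← ENNReal.ofReal_mul (by positivity)]
          apply ENNReal.ofReal_le_ofReal
          rw [mul_comm]
          apply mul_le_mul_of_nonneg_right _ (Real.rpow_nonneg hx.1.le _)
          apply Real.rpow_le_rpow_of_nonpos hQ _ (by linarith)
          nlinarith [hx.1]
        · apply setLIntegral_mono' measurableSet_Ioc
          intro x hx
          have hx0 : 0 < x := hw0.trans hx.1
          rw [← ENNReal.ofReal_mul (by positivity)]
          apply ENNReal.ofReal_le_ofReal
          calc x ^ (a - 1) * (Q + A * x) ^ (-τ) ≤ x ^ (a - 1) * ((Q + A) * x) ^ (-τ) := by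
                apply mul_le_mul_of_nonneg_left _ (Real.rpow_nonneg hx0.le _)
                apply Real.rpow_le_rpow_of_nonpos (by positivity) _ (by linarith)
                nlinarith [hx.2]
            _ = _ := by
                rw [Real.mul_rpow hQA.le hx0.le, show -(τ - a) - 1 = (a - 1) + -τ by ring, Real.rpow_add hx0]
                ring
    _ ≤ (∫⁻ x in Ioc (0 : ℝ) w, ENNReal.ofReal (Q ^ (-τ)) * ENNReal.ofReal (x ^ (a - 1))) +
        ∫⁻ x in Ioi w, ENNReal.ofReal ((Q + A) ^ (-τ)) * ENNReal.ofReal (x ^ (-(τ - a) - 1)) := by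
        gcongr
        exact Ioc_subset_Ioi_self
    _ = ENNReal.ofReal ((1 / a + 1 / (τ - a)) * (Q ^ (a - τ) * (Q + A) ^ (-a))) := by
        rw [lintegral_const_mul _ (by fun_prop), lintegral_const_mul _ (by fun_prop), lint_pow_small ha hw0.le,
          lint_pow_large (by linarith) hw0, ← ENNReal.ofReal_mul (by positivity), ← ENNReal.ofReal_mul (by positivity),
          ← ENNReal.ofReal_add _ _, e1, e2, add_mul]
        · positivity
        · have : 0 < τ - a := by linarith
          positivity

/-- density bound -/
lemma dens_le {a u : ℝ} (hu : u ∈ Ioo (0 : ℝ) 1) :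
    (1 - u ^ 2) ^ (a - 1) ≤ 2 ^ |a - 1| * (1 - u) ^ (a - 1) := by
  have h1 : 0 < 1 - u := by linarith [hu.2]
  rw [show 1 - u ^ 2 = (1 + u) * (1 - u) by ring, Real.mul_rpow (by linarith [hu.1]) h1.le]
  apply mul_le_mul_of_nonneg_right _ (by positivity)
  calc (1 + u) ^ (a - 1) ≤ (1 + u) ^ |a - 1| :=
        Real.rpow_le_rpow_of_exponent_le (by linarith [hu.1]) (le_abs_self _)
    _ ≤ _ := Real.rpow_le_rpow (by linarith [hu.1]) (by linarith [hu.2]) (abs_nonneg _)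

lemma lint_reflect (f : ℝ → ENNReal) :
    ∫⁻ u in Ioo (0:ℝ) 1, f (1 - u) = ∫⁻ x in Ioo (0:ℝ) 1, f x := by
  have := (Measure.measurePreserving_sub_left (volume : Measure ℝ) 1).setLIntegral_comp_preimage_emb
    (Homeomorph.subLeft (1:ℝ)).measurableEmbedding f (Ioo 0 1)
  rw [← this]
  congr 2
  ext x; simp

lemma lint_dens_right {a τ : ℝ} (ha : 0 < a) (hτ : a < τ) {Q A : ℝ} (hQ : 0 < Q) (hA : 0 ≤ A) :
    ∫⁻ u in Ioo (0 : ℝ) 1, ENNReal.ofReal ((1 - u ^ 2) ^ (a - 1) * (Q + A * (1 - u)) ^ (-τ)) ≤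
      ENNReal.ofReal (2 ^ |a - 1| * (1 / a + 1 / (τ - a)) * (Q ^ (a - τ) * (Q + A) ^ (-a))) := by
  calc _ ≤ ∫⁻ u in Ioo (0 : ℝ) 1, ENNReal.ofReal (2 ^ |a - 1|) * ENNReal.ofReal ((1 - u) ^ (a - 1) * (Q + A * (1 - u)) ^ (-τ)) := by
        apply setLIntegral_mono' measurableSet_Ioo
        intro u hu
        rw [← ENNReal.ofReal_mul (by positivity)]
        apply ENNReal.ofReal_le_ofReal
        rw [← mul_assoc]
        apply mul_le_mul_of_nonneg_right (dens_le hu)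
        have : 0 < 1 - u := by linarith [hu.2]
        positivity
    _ = ENNReal.ofReal (2 ^ |a - 1|) * ∫⁻ u in Ioo (0 : ℝ) 1, ENNReal.ofReal ((1 - u) ^ (a - 1) * (Q + A * (1 - u)) ^ (-τ)) :=
        lintegral_const_mul _ (by fun_prop)
    _ = ENNReal.ofReal (2 ^ |a - 1|) * ∫⁻ x in Ioo (0 : ℝ) 1, ENNReal.ofReal (x ^ (a - 1) * (Q + A * x) ^ (-τ)) := by
        rw [lint_reflect (fun x => ENNReal.ofReal (x ^ (a - 1) * (Q + A * x) ^ (-τ)))]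
    _ ≤ ENNReal.ofReal (2 ^ |a - 1|) * ENNReal.ofReal ((1 / a + 1 / (τ - a)) * (Q ^ (a - τ) * (Q + A) ^ (-a))) := by
        gcongr
        exact (lintegral_mono_set Ioo_subset_Ioc_self).trans (lint_core ha hτ hQ hA)
    _ = _ := by
        rw [← ENNReal.ofReal_mul (by positivity), mul_assoc]

lemma lint_neg (f : ℝ → ENNReal) :
    ∫⁻ u in Ioo (-1:ℝ) 0, f u = ∫⁻ x in Ioo (0:ℝ) 1, f (-x) := by
  have := (Measure.measurePreserving_neg (volume : Measure ℝ)).setLIntegral_comp_preimage_emb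
    (Homeomorph.neg ℝ).measurableEmbedding f (Ioo (-1) 0)
  rw [← this]
  congr 2
  ext x; simp

lemma lint_dens_full {a τ : ℝ} (ha : 0 < a) (hτ : a < τ) {Q A : ℝ} (hQ : 0 < Q) (hA : 0 ≤ A) :
    ∫⁻ u in Icc (-1 : ℝ) 1, ENNReal.ofReal ((1 - u ^ 2) ^ (a - 1) * (Q + A * (1 - u)) ^ (-τ)) ≤
      ENNReal.ofReal (2 * (2 ^ |a - 1| * (1 / a + 1 / (τ - a))) * (Q ^ (a - τ) * (Q + A) ^ (-a))) := by
  set f : ℝ → ENNReal := fun u => ENNReal.ofReal ((1 - u ^ 2) ^ (a - 1) * (Q + A * (1 - u)) ^ (-τ)) with hf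
  have hτa : 0 < τ - a := by linarith
  have h0 : ∫⁻ u in Icc (-1 : ℝ) 1, f u ≤ (∫⁻ u in Ioo (-1 : ℝ) 0, f u) + ∫⁻ u in Ioo (0 : ℝ) 1, f u := by
    have : (Icc (-1 : ℝ) 1) =ᵐ[volume] (Ioo (-1 : ℝ) 0 ∪ Ioo 0 1 : Set ℝ) := by
      have h1 : (Ioc (-1:ℝ) 0 ∪ Ioc 0 1 : Set ℝ) = Ioc (-1) 1 := Ioc_union_Ioc_eq_Ioc (by norm_num) (by norm_num)
      refine Ioc_ae_eq_Icc.symm.trans ?_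
      rw [← h1]
      exact (Ioo_ae_eq_Ioc.symm).union Ioo_ae_eq_Ioc.symm
    rw [setLIntegral_congr this]
    exact lintegral_union_le _ _ _
  refine h0.trans ?_
  have h1 := lint_dens_right ha hτ hQ hA
  have h2 : ∫⁻ u in Ioo (-1 : ℝ) 0, f u ≤ ∫⁻ u in Ioo (0 : ℝ) 1, f u := by
    rw [lint_neg]
    apply setLIntegral_mono' measurableSet_Ioo
    intro x hx
    apply ENNReal.ofReal_le_ofReal
    rw [neg_sq]
    have : 0 ≤ 1 - x ^ 2 := by nlinarith [hx.1, hx.2]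
    apply mul_le_mul_of_nonneg_left _ (by positivity)
    have h3 : 0 < 1 - x := by linarith [hx.2]
    apply Real.rpow_le_rpow_of_nonpos (by positivity) _ (by linarith)
    nlinarith [hx.1]
  calc _ ≤ _ := add_le_add (h2.trans h1) h1
    _ = _ := by
      rw [← ENNReal.ofReal_add (by positivity) (by positivity)]
      congr 1; ring

/-- One-variable estimate. -/
lemma lint_Pi {α τ : ℝ} (hα : -(1 / 2) ≤ α) (hτ : α + 1 / 2 < τ) :
    ∃ K, 0 < K ∧ ∀ Q A : ℝ, 0 < Q → 0 ≤ A →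
      ∫⁻ u, ENNReal.ofReal ((Q + A * (1 - u)) ^ (-τ)) ∂(PiMeasure α) ≤
        ENNReal.ofReal (K * (Q ^ (α + 1 / 2 - τ) * (Q + A) ^ (-(α + 1 / 2)))) := by
  unfold PiMeasure
  split_ifs with h
  · refine ⟨1, one_pos, fun Q A hQ hA => ?_⟩
    subst h
    have e : Q ^ (-(1 / 2) + 1 / 2 - τ) * (Q + A) ^ (-(-(1 / 2) + 1 / 2 : ℝ)) = Q ^ (-τ) := by
      norm_num
    rw [e, one_mul, lintegral_smul_measure, lintegral_add_measure, lintegral_dirac, lintegral_dirac]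
    have h1 : ENNReal.ofReal ((Q + A * (1 - -1)) ^ (-τ)) ≤ ENNReal.ofReal (Q ^ (-τ)) := by
      apply ENNReal.ofReal_le_ofReal
      apply Real.rpow_le_rpow_of_nonpos hQ _ (by linarith)
      nlinarith
    have h2 : ENNReal.ofReal ((Q + A * (1 - 1)) ^ (-τ)) = ENNReal.ofReal (Q ^ (-τ)) := by simp
    rw [h2, smul_eq_mul]
    calc _ ≤ (2:ENNReal)⁻¹ * (ENNReal.ofReal (Q ^ (-τ)) + ENNReal.ofReal (Q ^ (-τ))) := by gcongr
      _ = _ := by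
        rw [← two_mul, ← mul_assoc, ENNReal.inv_mul_cancel (by norm_num) (by norm_num), one_mul]
  · have hα' : 0 < α + 1 / 2 := by
      rcases hα.lt_or_eq with h1 | h1
      · linarith
      · exact absurd h1.symm h
    set c := Real.Gamma (α + 1) / (Real.sqrt π * Real.Gamma (α + 1 / 2)) with hc
    have hc0 : 0 < c := by
      have := Real.Gamma_pos_of_pos hα'
      have := Real.Gamma_pos_of_pos (show 0 < α + 1 by linarith)
      have := Real.sqrt_pos.2 Real.pi_pos
      positivity
    have hτa : 0 < τ - (α + 1 / 2) := by linarith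
    refine ⟨c * (2 * (2 ^ |(α + 1/2) - 1| * (1 / (α + 1/2) + 1 / (τ - (α + 1/2))))), by positivity, fun Q A hQ hA => ?_⟩
    rw [lintegral_withDensity_eq_lintegral_mul _ (by fun_prop) (by fun_prop)]
    have key := lint_dens_full hα' hτ hQ hA
    rw [mul_assoc c, ENNReal.ofReal_mul hc0.le]
    refine le_trans ?_ (mul_le_mul_right key _)
    rw [← lintegral_const_mul _ (by fun_prop)]
    apply setLIntegral_mono' measurableSet_Icc
    intro u hu
    have hu2 : 0 ≤ 1 - u ^ 2 := by nlinarith [hu.1, hu.2]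
    simp only [Pi.mul_apply]
    rw [← ENNReal.ofReal_mul (by positivity), ← ENNReal.ofReal_mul hc0.le]
    apply ENNReal.ofReal_le_ofReal
    rw [show α + 1 / 2 - 1 = α - 1 / 2 by ring, mul_assoc]

lemma PiMeasure_finite {α : ℝ} (hα : -(1 / 2) ≤ α) : IsFiniteMeasure (PiMeasure α) := by
  obtain ⟨K, hK, h⟩ := lint_Pi (τ := α + 1) hα (by linarith)
  have := h 1 0 one_pos le_rfl
  simp only [zero_mul, add_zero, Real.one_rpow, ENNReal.ofReal_one, lintegral_const, one_mul, mul_one] at this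
  exact ⟨this.trans_lt ENNReal.ofReal_lt_top⟩

open MeasureTheory Real Set

lemma qfun_eq (θ φ u v : ℝ) : qfun θ φ u v =
    (1 - Real.cos ((θ - φ) / 2)) + Real.sin (θ / 2) * Real.sin (φ / 2) * (1 - u)
      + Real.cos (θ / 2) * Real.cos (φ / 2) * (1 - v) := by
  unfold qfun
  rw [show (θ - φ) / 2 = θ / 2 - φ / 2 by ring, Real.cos_sub]; ring

lemma qfun_symm (θ φ u v : ℝ) : qfun θ φ u v = qfun φ θ u v := by
  unfold qfun; ring

lemma sin_half_pos {θ : ℝ} (h : θ ∈ Ioo (0 : ℝ) π) : 0 < Real.sin (θ / 2) :=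
  Real.sin_pos_of_pos_of_lt_pi (by linarith [h.1]) (by linarith [h.2, Real.pi_pos])

lemma cos_half_pos {θ : ℝ} (h : θ ∈ Ioo (0 : ℝ) π) : 0 < Real.cos (θ / 2) :=
  Real.cos_pos_of_mem_Ioo ⟨by linarith [h.1, Real.pi_pos], by linarith [h.2]⟩

lemma q0_lb {θ φ : ℝ} (hθ : θ ∈ Ioo (0 : ℝ) π) (hφ : φ ∈ Ioo (0 : ℝ) π) :
    |θ - φ| ^ 2 ≤ 20 * (1 - Real.cos ((θ - φ) / 2)) := by
  have h := Real.cos_le_one_sub_mul_cos_sq (x := (θ - φ) / 2) (by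
    rw [abs_le]; constructor <;> linarith [hθ.1, hθ.2, hφ.1, hφ.2])
  have hp := Real.pi_lt_d2
  have hp0 := Real.pi_pos
  have hpp : π ^ 2 ≤ 10 := by nlinarith
  rw [sq_abs]
  have h2 : (1:ℝ) / 5 ≤ 2 / π ^ 2 := by
    rw [div_le_div_iff₀ (by norm_num) (by positivity)]; linarith
  have h3 : (1:ℝ) / 5 * ((θ - φ) / 2) ^ 2 ≤ 2 / π ^ 2 * ((θ - φ) / 2) ^ 2 := by gcongr
  nlinarith

lemma q0_pos {θ φ : ℝ} (hθ : θ ∈ Ioo (0 : ℝ) π) (hφ : φ ∈ Ioo (0 : ℝ) π) (h : θ ≠ φ) :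
    0 < 1 - Real.cos ((θ - φ) / 2) := by
  have := q0_lb hθ hφ
  have : 0 < |θ - φ| ^ 2 := by
    have := abs_pos.2 (sub_ne_zero.2 h)
    positivity
  linarith

lemma qfun_lb {θ φ u v : ℝ} (hθ : θ ∈ Ioo (0 : ℝ) π) (hφ : φ ∈ Ioo (0 : ℝ) π)
    (hu : u ∈ Icc (-1 : ℝ) 1) (hv : v ∈ Icc (-1 : ℝ) 1) :
    1 - Real.cos ((θ - φ) / 2) ≤ qfun θ φ u v := by
  rw [qfun_eq]
  have := mul_nonneg (mul_nonneg (sin_half_pos hθ).le (sin_half_pos hφ).le) (sub_nonneg.2 hu.2)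
  have := mul_nonneg (mul_nonneg (cos_half_pos hθ).le (cos_half_pos hφ).le) (sub_nonneg.2 hv.2)
  linarith

lemma aux_sq {x y r : ℝ} (hx : 0 ≤ x) (h : |x - y| ≤ r / 2) :
    x ^ 2 ≤ 2 * (x * y) + r ^ 2 / 4 := by
  have h1 := (abs_le.1 h)
  nlinarith [sq_nonneg (x - r / 2)]

lemma aux_sq2 {x y z r : ℝ} (hx : 0 ≤ x) (h : |x - y| ≤ r / 2) (hz : |z - x| ≤ r / 2) :
    z ^ 2 ≤ 4 * (x * y) + r ^ 2 := by
  have h1 := aux_sq hx h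
  have h2 : (z - x) ^ 2 ≤ (r / 2) ^ 2 := sq_le_sq' (by linarith [(abs_le.1 hz).1]) (abs_le.1 hz).2
  nlinarith [sq_nonneg (z - 2 * x)]

lemma sin_half_lip (x y : ℝ) : |Real.sin (x / 2) - Real.sin (y / 2)| ≤ |x - y| / 2 := by
  have := Real.abs_sin_sub_sin_le (x / 2) (y / 2)
  rw [← sub_div, abs_div, abs_two] at this
  exact this

lemma cos_half_lip (x y : ℝ) : |Real.cos (x / 2) - Real.cos (y / 2)| ≤ |x - y| / 2 := by
  have := Real.abs_cos_sub_cos_le (x / 2) (y / 2)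
  rw [← sub_div, abs_div, abs_two] at this
  exact this

lemma jacobi_ball_le {α β : ℝ} (hα : -(1 / 2) ≤ α) (hβ : -(1 / 2) ≤ β) {θ φ : ℝ}
    (hθ : θ ∈ Ioo (0 : ℝ) π) (hφ : φ ∈ Ioo (0 : ℝ) π) :
    jacobiMeasure α β (jacobiBall θ |θ - φ|) ≤ ENNReal.ofReal
      ((20 * ((1 - Real.cos ((θ - φ) / 2)) + Real.sin (θ / 2) * Real.sin (φ / 2))) ^ (α + 1 / 2) *
       (20 * ((1 - Real.cos ((θ - φ) / 2)) + Real.cos (θ / 2) * Real.cos (φ / 2))) ^ (β + 1 / 2) *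
       (2 * |θ - φ|)) := by
  have hA := mul_pos (sin_half_pos hθ) (sin_half_pos hφ)
  have hB := mul_pos (cos_half_pos hθ) (cos_half_pos hφ)
  have hq := q0_lb hθ hφ
  have hq0 : 0 ≤ 1 - Real.cos ((θ - φ) / 2) := by linarith [Real.cos_le_one ((θ - φ) / 2)]
  have hm : MeasurableSet (jacobiBall θ |θ - φ|) := measurableSet_Ioo.inter measurableSet_Ioo
  unfold jacobiMeasure
  rw [withDensity_apply _ hm, Measure.restrict_restrict hm]
  have hs : jacobiBall θ |θ - φ| ∩ Ioo 0 π = jacobiBall θ |θ - φ| := by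
    unfold jacobiBall; rw [inter_assoc, inter_self]
  rw [hs, ENNReal.ofReal_mul (by positivity)]
  calc _ ≤ ∫⁻ x in jacobiBall θ |θ - φ|, ENNReal.ofReal
          ((20 * ((1 - Real.cos ((θ - φ) / 2)) + Real.sin (θ / 2) * Real.sin (φ / 2))) ^ (α + 1 / 2) *
       (20 * ((1 - Real.cos ((θ - φ) / 2)) + Real.cos (θ / 2) * Real.cos (φ / 2))) ^ (β + 1 / 2)) := by
        apply setLIntegral_mono' hm
        intro x hx
        apply ENNReal.ofReal_le_ofReal
        have hxp : x ∈ Ioo 0 π := hx.2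
        have hxr : |x - θ| ≤ |θ - φ| := by
          rw [abs_le]; constructor <;> linarith [hx.1.1, hx.1.2]
        have e1 := (sin_half_pos hxp).le
        have e2 := (cos_half_pos hxp).le
        have f1 := aux_sq2 (sin_half_pos hθ).le (sin_half_lip θ φ) ((sin_half_lip x θ).trans (by linarith))
        have f2 := aux_sq2 (cos_half_pos hθ).le (cos_half_lip θ φ) ((cos_half_lip x θ).trans (by linarith))
        have g1 : Real.sin (x / 2) ^ (2 * α + 1) = (Real.sin (x / 2) ^ 2) ^ (α + 1 / 2) := by
          rw [← Real.rpow_natCast (Real.sin (x / 2)) 2, ← Real.rpow_mul e1]; congr 1; push_cast; ring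
        have g2 : Real.cos (x / 2) ^ (2 * β + 1) = (Real.cos (x / 2) ^ 2) ^ (β + 1 / 2) := by
          rw [← Real.rpow_natCast (Real.cos (x / 2)) 2, ← Real.rpow_mul e2]; congr 1; push_cast; ring
        rw [g1, g2]
        apply mul_le_mul
        · apply Real.rpow_le_rpow (by positivity) _ (by linarith)
          linarith
        · apply Real.rpow_le_rpow (by positivity) _ (by linarith)
          linarith
        · positivity
        · positivity
    _ ≤ _ := by
        rw [setLIntegral_const]
        gcongr
        calc volume (jacobiBall θ |θ - φ|) ≤ volume (Ioo (θ - |θ - φ|) (θ + |θ - φ|)) :=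
              measure_mono inter_subset_left
          _ = _ := by rw [Real.volume_Ioo]; congr 1; ring

lemma jacobi_ball_pos (α β : ℝ) {θ r : ℝ} (hθ : θ ∈ Ioo (0 : ℝ) π) (hr : 0 < r) :
    0 < jacobiMeasure α β (jacobiBall θ r) := by
  have hm : MeasurableSet (jacobiBall θ r) := measurableSet_Ioo.inter measurableSet_Ioo
  unfold jacobiMeasure
  rw [withDensity_apply _ hm, Measure.restrict_restrict hm]
  rw [setLIntegral_pos_iff (by fun_prop)]
  have ho : IsOpen (jacobiBall θ r) := isOpen_Ioo.inter isOpen_Ioo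
  have : (jacobiBall θ r) ⊆ Function.support (fun θ => ENNReal.ofReal (Real.sin (θ / 2) ^ (2 * α + 1) * Real.cos (θ / 2) ^ (2 * β + 1)))
      ∩ (jacobiBall θ r ∩ Ioo 0 π) := by
    intro x hx
    refine ⟨?_, hx, hx.2⟩
    have := sin_half_pos hx.2
    have := cos_half_pos hx.2
    simp only [Function.mem_support]
    apply (ENNReal.ofReal_pos.2 _).ne'
    positivity
  refine lt_of_lt_of_le (ho.measure_pos volume ⟨θ, ?_⟩) (measure_mono this)
  exact ⟨⟨by linarith, by linarith⟩, hθ⟩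

lemma double_est {α β : ℝ} (hα : -(1 / 2) ≤ α) (hβ : -(1 / 2) ≤ β) :
    ∃ K, 0 < K ∧ ∀ θ ∈ Ioo (0 : ℝ) π, ∀ φ ∈ Ioo (0 : ℝ) π, θ ≠ φ →
      ∫⁻ u, ∫⁻ v, ENNReal.ofReal (qfun θ φ u v ^ (-(α + β + 2))) ∂(PiMeasure β) ∂(PiMeasure α) ≤
        ENNReal.ofReal (K / (|θ - φ| * (jacobiMeasure α β (jacobiBall θ |θ - φ|)).toReal)) := by
  obtain ⟨K1, hK1, h1⟩ := lint_Pi (α := β) (τ := α + β + 2) hβ (by linarith)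
  obtain ⟨K2, hK2, h2⟩ := lint_Pi (α := α) (τ := α + 3 / 2) hα (by linarith)
  refine ⟨K1 * K2 * (40 * (20 ^ (α + 1 / 2) * 20 ^ (β + 1 / 2))), by positivity, fun θ hθ φ hφ hne => ?_⟩
  have hA := mul_pos (sin_half_pos hθ) (sin_half_pos hφ)
  have hB := mul_pos (cos_half_pos hθ) (cos_half_pos hφ)
  have hq := q0_lb hθ hφ
  have hq0 := q0_pos hθ hφ hne
  have hr : 0 < |θ - φ| := abs_pos.2 (sub_ne_zero.2 hne)
  have hmu := jacobi_ball_le hα hβ hθ hφ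
  have hmp := jacobi_ball_pos α β hθ hr
  have hq := q0_lb hθ hφ
  simp only [qfun_eq θ φ]
  set q0 := 1 - Real.cos ((θ - φ) / 2) with hq0d
  set A := Real.sin (θ / 2) * Real.sin (φ / 2) with hAd
  set B := Real.cos (θ / 2) * Real.cos (φ / 2) with hBd
  set M := jacobiMeasure α β (jacobiBall θ |θ - φ|) with hM
  set r := |θ - φ| with hrd
  have step : ∀ u ∈ Icc (-1 : ℝ) 1,
      ∫⁻ v, ENNReal.ofReal ((q0 + A * (1 - u) + B * (1 - v)) ^ (-(α + β + 2))) ∂(PiMeasure β) ≤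
      ENNReal.ofReal (K1 * (q0 + B) ^ (-(β + 1 / 2))) * ENNReal.ofReal ((q0 + A * (1 - u)) ^ (-(α + 3 / 2))) := by
    intro u hu
    have hu' : 0 ≤ A * (1 - u) := mul_nonneg hA.le (sub_nonneg.2 hu.2)
    refine (h1 (q0 + A * (1 - u)) B (by linarith) hB.le).trans ?_
    rw [← ENNReal.ofReal_mul (by positivity)]
    apply ENNReal.ofReal_le_ofReal
    rw [show β + 1 / 2 - (α + β + 2) = -(α + 3 / 2) by ring, mul_assoc K1]
    apply mul_le_mul_of_nonneg_left _ hK1.le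
    rw [mul_comm]
    apply mul_le_mul_of_nonneg_right _ (by positivity)
    apply Real.rpow_le_rpow_of_nonpos (by positivity) (by linarith) (by linarith)
  calc _ ≤ ∫⁻ u, ENNReal.ofReal (K1 * (q0 + B) ^ (-(β + 1 / 2))) * ENNReal.ofReal ((q0 + A * (1 - u)) ^ (-(α + 3 / 2))) ∂(PiMeasure α) := by
        apply lintegral_mono_ae
        filter_upwards [PiMeasure_ae α] with u hu using step u hu
    _ = ENNReal.ofReal (K1 * (q0 + B) ^ (-(β + 1 / 2))) * ∫⁻ u, ENNReal.ofReal ((q0 + A * (1 - u)) ^ (-(α + 3 / 2))) ∂(PiMeasure α) :=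
        lintegral_const_mul _ (by fun_prop)
    _ ≤ ENNReal.ofReal (K1 * (q0 + B) ^ (-(β + 1 / 2))) * ENNReal.ofReal (K2 * (q0 ^ (α + 1 / 2 - (α + 3 / 2)) * (q0 + A) ^ (-(α + 1 / 2)))) := by
        gcongr
        exact h2 q0 A hq0 hA.le
    _ ≤ _ := by
        rw [← ENNReal.ofReal_mul (by positivity)]
        apply ENNReal.ofReal_le_ofReal
        have hMt : M ≠ ⊤ := ne_top_of_le_ne_top ENNReal.ofReal_ne_top hmu
        have hMr : 0 < M.toReal := ENNReal.toReal_pos hmp.ne' hMt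
        have hMle := ENNReal.toReal_le_of_le_ofReal (by positivity) hmu
        rw [le_div_iff₀ (by positivity)]
        rw [show α + 1 / 2 - (α + 3 / 2) = -1 by ring, Real.rpow_neg_one,
          Real.rpow_neg (by positivity), Real.rpow_neg (by positivity)]
        rw [Real.mul_rpow (by norm_num) (by positivity), Real.mul_rpow (by norm_num) (by positivity)] at hMle
        have hX : 0 < (q0 + A) ^ (α + 1 / 2) := by positivity
        have hY : 0 < (q0 + B) ^ (β + 1 / 2) := by positivity
        set X := (q0 + A) ^ (α + 1 / 2)
        set Y := (q0 + B) ^ (β + 1 / 2)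
        have e1 : (0:ℝ) < 20 ^ (α + 1 / 2) := by positivity
        have e2 : (0:ℝ) < 20 ^ (β + 1 / 2) := by positivity
        set c1 := (20 : ℝ) ^ (α + 1 / 2)
        set c2 := (20 : ℝ) ^ (β + 1 / 2)
        calc K1 * Y⁻¹ * (K2 * (q0⁻¹ * X⁻¹)) * (r * M.toReal)
            ≤ K1 * Y⁻¹ * (K2 * (q0⁻¹ * X⁻¹)) * (r * (c1 * X * (c2 * Y) * (2 * r))) := by gcongr
          _ = K1 * K2 * (2 * (c1 * c2)) * (r ^ 2 * q0⁻¹) := by field_simp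
          _ ≤ K1 * K2 * (2 * (c1 * c2)) * 20 := by
              gcongr
              rw [← div_eq_mul_inv, div_le_iff₀ hq0]; exact hq
          _ = _ := by ring

open MeasureTheory Real Set Filter Topology

lemma cosh_lb (n : ℕ) (hn : 1 ≤ n) (x : ℝ) :
    x ^ (2 * n) / (Nat.factorial (2 * n) : ℝ) ≤ Real.cosh x - 1 := by
  have h := Real.hasSum_cosh x
  have h2 := sum_le_hasSum {0, n} (fun i _ => by
    have : 0 ≤ x ^ (2 * i) := (even_two_mul i).pow_nonneg x
    positivity) h
  rw [Finset.sum_pair (by omega)] at h2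
  simp at h2
  linarith

lemma Dd_lb (N : ℕ) (hN : 1 ≤ N) : ∃ c, 0 < c ∧ ∀ t s : ℝ, 0 < s → s ≤ 2 →
    c * ((t ^ 2 + s) * (1 + (t ^ 2 + s)) ^ N) ≤ Dd t s := by
  have key : ∀ n : ℕ, 1 ≤ n → ∃ K : ℝ, 0 < K ∧ ∀ t : ℝ, t ^ (2 * n) ≤ K * (Real.cosh (t / 2) - 1) := by
    intro n hn
    refine ⟨2 ^ (2 * n) * (Nat.factorial (2 * n) : ℝ), by positivity, fun t => ?_⟩
    have := cosh_lb n hn (t / 2)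
    rw [div_pow, div_div, div_le_iff₀ (by positivity)] at this
    linarith
  obtain ⟨K1, hK1, h1⟩ := key 1 le_rfl
  obtain ⟨K2, hK2, h2⟩ := key N hN
  obtain ⟨K3, hK3, h3⟩ := key (N + 1) (by omega)
  set K : ℝ := 6 ^ N + 2 ^ N * 2 * K2 + 6 ^ N * K1 + 2 ^ N * K3 with hK
  have hKp : 0 < K := by positivity
  refine ⟨K⁻¹, by positivity, fun t s hs hs2 => ?_⟩
  rw [inv_mul_le_iff₀ hKp]
  have hc : 0 ≤ Real.cosh (t / 2) - 1 := by linarith [Real.one_le_cosh (t / 2)]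
  have hb : (1 + (t ^ 2 + s)) ^ N ≤ 6 ^ N + 2 ^ N * t ^ (2 * N) := by
    rw [pow_mul]
    have hx : 0 ≤ t ^ 2 := sq_nonneg t
    calc (1 + (t ^ 2 + s)) ^ N ≤ (3 + t ^ 2) ^ N := pow_le_pow_left₀ (by positivity) (by linarith) N
      _ ≤ 2 ^ (N - 1) * (3 ^ N + (t ^ 2) ^ N) := add_pow_le (by norm_num) hx N
      _ ≤ 2 ^ N * (3 ^ N + (t ^ 2) ^ N) := by
          gcongr
          · norm_num
          · omega
      _ = _ := by rw [show (6:ℝ) = 2 * 3 by norm_num, mul_pow]; ring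
  have h1' := h1 t
  have h2' := h2 t
  have h3' := h3 t
  have e3 : t ^ (2 * (N + 1)) = t ^ 2 * t ^ (2 * N) := by rw [← pow_add]; congr 1; ring
  rw [e3] at h3'
  rw [mul_one] at h1'
  have hp : 0 ≤ t ^ (2 * N) := (even_two_mul N).pow_nonneg t
  unfold Dd
  set X := Real.cosh (t / 2) - 1
  calc (t ^ 2 + s) * (1 + (t ^ 2 + s)) ^ N ≤ (t ^ 2 + s) * (6 ^ N + 2 ^ N * t ^ (2 * N)) := by gcongr
    _ = 6 ^ N * s + 2 ^ N * (s * t ^ (2 * N)) + 6 ^ N * t ^ 2 + 2 ^ N * (t ^ 2 * t ^ (2 * N)) := by ring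
    _ ≤ 6 ^ N * s + 2 ^ N * (2 * (K2 * X)) + 6 ^ N * (K1 * X) + 2 ^ N * (K3 * X) := by gcongr
    _ = 6 ^ N * s + (2 ^ N * 2 * K2 + 6 ^ N * K1 + 2 ^ N * K3) * X := by ring
    _ ≤ K * s + K * X := by
        gcongr
        · rw [hK]; nlinarith [show (0:ℝ) < 2 ^ N * 2 * K2 by positivity, show (0:ℝ) < 6 ^ N * K1 by positivity, show (0:ℝ) < 2 ^ N * K3 by positivity]
        · rw [hK]; nlinarith [show (0:ℝ) < 6 ^ N by positivity]
    _ = _ := by ring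

lemma pointwise {σ : ℝ} (hσ : 1 ≤ σ) (k₀ k : ℕ) (hk₀ : 1 ≤ k₀) (hk : k ≤ k₀) :
    ∃ C, 0 < C ∧ ∀ t s : ℝ, 0 < t → 0 < s → s ≤ 2 →
      Dd t s ^ (-(σ + 1 / 2 + k)) * (1 + Dd t s) ^ (1 / 2 + k : ℝ) * Real.sqrt s * t ^ (2 * k₀ - 1)
        ≤ C * (t * (t ^ 2 + s) ^ (-σ - 1)) := by
  obtain ⟨c, hc, h⟩ := Dd_lb k₀ hk₀
  refine ⟨2 * (1 + c⁻¹) ^ k₀ * c ^ (-σ), by positivity, fun t s ht hs hs2 => ?_⟩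
  have hD := h t s hs hs2
  have hsD := le_Dd t s
  have hDp := Dd_pos (t := t) hs
  set D := Dd t s
  have hE : 0 < t ^ 2 + s := by positivity
  set E := t ^ 2 + s with hEd
  set R := (1 + D) / D with hR
  have hR1 : 1 ≤ R := by rw [hR, le_div_iff₀ hDp]; linarith
  have hRp : 0 < R := by linarith
  have e1 : D ^ (-(σ + 1 / 2 + k)) * (1 + D) ^ (1 / 2 + k : ℝ) = D ^ (-σ) * (Real.sqrt R * R ^ k) := by
    have : Real.sqrt R * R ^ k = R ^ (1 / 2 + k : ℝ) := by
      rw [Real.rpow_add hRp, Real.sqrt_eq_rpow, Real.rpow_natCast]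
    rw [this, hR, Real.div_rpow (by linarith) hDp.le, show -(σ + 1 / 2 + (k : ℝ)) = -σ - (1 / 2 + k) by ring,
      Real.rpow_sub hDp]
    ring
  have e2 : Real.sqrt R * Real.sqrt s ≤ 2 := by
    rw [← Real.sqrt_mul hRp.le]
    apply Real.sqrt_le_iff.2 ⟨by norm_num, _⟩
    rw [hR, div_mul_eq_mul_div, div_le_iff₀ hDp]
    nlinarith
  have e3 : R ^ k ≤ (1 + c⁻¹) ^ k₀ * ((1 + E) / E) ^ k₀ := by
    rw [← mul_pow]
    refine (pow_le_pow_right₀ hR1 hk).trans ?_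
    gcongr
    have h1 : c * E ≤ D := by
      refine le_trans ?_ hD
      apply mul_le_mul_of_nonneg_left _ hc.le
      have : 1 ≤ (1 + E) ^ k₀ := one_le_pow₀ (by linarith)
      nlinarith
    have h2 : 1 / D ≤ 1 / (c * E) := one_div_le_one_div_of_le (by positivity) h1
    rw [hR, add_div, div_self hDp.ne', add_div, div_self hE.ne']
    have h3 : 1 / (c * E) = c⁻¹ * (1 / E) := by field_simp
    have : 0 < 1 / E := by positivity
    have : 0 < c⁻¹ := by positivity
    nlinarith
  have e4 : D ^ (-σ) ≤ c ^ (-σ) * (E ^ (-σ) * ((1 + E) ^ k₀)⁻¹) := by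
    have hP : 1 ≤ (1 + E) ^ k₀ := one_le_pow₀ (by linarith)
    calc D ^ (-σ) ≤ (c * (E * (1 + E) ^ k₀)) ^ (-σ) :=
          Real.rpow_le_rpow_of_nonpos (by positivity) hD (by linarith)
      _ = c ^ (-σ) * (E ^ (-σ) * ((1 + E) ^ k₀) ^ (-σ)) := by
          rw [Real.mul_rpow hc.le (by positivity), Real.mul_rpow hE.le (by positivity)]
      _ ≤ _ := by
          gcongr
          rw [← Real.rpow_neg_one]
          apply Real.rpow_le_rpow_of_exponent_le hP; linarith
  have e5 : t ^ (2 * k₀ - 1) ≤ t * E ^ (k₀ - 1) := by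
    rw [show 2 * k₀ - 1 = 1 + 2 * (k₀ - 1) by omega, pow_add, pow_one, pow_mul]
    gcongr
    rw [hEd]; linarith
  rw [e1]
  calc D ^ (-σ) * (Real.sqrt R * R ^ k) * Real.sqrt s * t ^ (2 * k₀ - 1)
      = D ^ (-σ) * R ^ k * (Real.sqrt R * Real.sqrt s) * t ^ (2 * k₀ - 1) := by ring
    _ ≤ (c ^ (-σ) * (E ^ (-σ) * ((1 + E) ^ k₀)⁻¹)) * ((1 + c⁻¹) ^ k₀ * ((1 + E) / E) ^ k₀) * 2 * (t * E ^ (k₀ - 1)) := by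
        gcongr
    _ = _ := by
        rw [Real.rpow_sub hE, Real.rpow_one, div_pow]
        obtain ⟨j, rfl⟩ : ∃ j, k₀ = j + 1 := ⟨k₀ - 1, by omega⟩
        rw [Nat.add_sub_cancel]
        have : (1 + E) ≠ 0 := by positivity
        field_simp
        ring

lemma lint_t {σ s : ℝ} (hσ : 0 < σ) (hs : 0 < s) :
    ∫⁻ t in Ioi (0 : ℝ), ENNReal.ofReal (t * (t ^ 2 + s) ^ (-σ - 1)) = ENNReal.ofReal (s ^ (-σ) / (2 * σ)) := by
  have hd : ∀ x ∈ Ici (0:ℝ), HasDerivAt (fun t : ℝ => -((t ^ 2 + s) ^ (-σ) / (2 * σ))) (x * (x ^ 2 + s) ^ (-σ - 1)) x := by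
    intro x hx
    have hp : 0 < x ^ 2 + s := by positivity
    have h1 : HasDerivAt (fun t : ℝ => t ^ 2 + s) (2 * x) x := by
      simpa using (hasDerivAt_pow 2 x).add_const s
    refine ((h1.rpow_const (p := -σ) (Or.inl hp.ne')).div_const (2 * σ)).neg.congr_deriv ?_
    field_simp
  have hpos : ∀ x ∈ Ioi (0:ℝ), 0 ≤ x * (x ^ 2 + s) ^ (-σ - 1) := by
    intro x hx
    have : 0 < x := hx
    positivity
  have hlim : Tendsto (fun t : ℝ => -((t ^ 2 + s) ^ (-σ) / (2 * σ))) atTop (𝓝 0) := by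
    have h1 : Tendsto (fun t : ℝ => t ^ 2 + s) atTop atTop :=
      tendsto_atTop_add_const_right _ _ (tendsto_pow_atTop (by norm_num))
    have h2 := (tendsto_rpow_neg_atTop hσ).comp h1
    simpa using (h2.div_const (2 * σ)).neg
  rw [← ofReal_integral_eq_lintegral_ofReal]
  · rw [integral_Ioi_of_hasDerivAt_of_nonneg' hd hpos hlim]
    congr 1; simp
  · exact integrableOn_Ioi_deriv_of_nonneg' hd hpos hlim
  · filter_upwards [ae_restrict_mem measurableSet_Ioi] with x hx using hpos x hx

open MeasureTheory Real Set Filter Topology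

lemma Cls.meas {p e : ℝ} {F : ℝ → ℝ → ℝ} (h : Cls p e F) :
    Measurable (fun x : ℝ × ℝ => F x.1 x.2) := by
  induction h with
  | add F G hF hG ihF ihG => exact ihF.add ihG
  | term c a b τ h => unfold Dd; fun_prop

lemma Cls.bdd {p e : ℝ} {F : ℝ → ℝ → ℝ} (h : Cls p e F) {q0 : ℝ} (hq : 0 < q0) (x : ℝ) :
    ∃ M, ∀ t ∈ Icc (x - 1) (x + 1), ∀ s ∈ Icc q0 2, ‖F t s‖ ≤ M := by
  have hc : IsCompact (Icc (x - 1) (x + 1) ×ˢ Icc q0 2) := isCompact_Icc.prod isCompact_Icc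
  obtain ⟨M, hM⟩ := hc.exists_bound_of_continuousOn (h.cont.mono (fun y hy =>
    ⟨mem_univ _, lt_of_lt_of_le hq hy.2.1⟩))
  exact ⟨M, fun t ht s hs => hM (t, s) ⟨ht, hs⟩⟩

lemma Cls.integrable {p e : ℝ} {F : ℝ → ℝ → ℝ} (h : Cls p e F) {q0 : ℝ} (hq : 0 < q0)
    {ν : Measure (ℝ × ℝ)} [IsFiniteMeasure ν] {Qf : ℝ × ℝ → ℝ} (hQm : Measurable Qf)
    (hQ : ∀ᵐ w ∂ν, Qf w ∈ Icc q0 2) (t : ℝ) : Integrable (fun w => F t (Qf w)) ν := by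
  obtain ⟨M, hM⟩ := h.bdd hq t
  have hm : Measurable (fun w => F t (Qf w)) :=
    h.meas.comp (measurable_const.prodMk hQm)
  refine Integrable.of_bound hm.aestronglyMeasurable M ?_
  filter_upwards [hQ] with w hw
  exact hM t ⟨by linarith, by linarith⟩ _ hw

lemma Cls.hasDerivAt_integral {p e p' e' : ℝ} {F F' : ℝ → ℝ → ℝ} (h : Cls p e F) (h' : Cls p' e' F')
    (hd : ∀ t s, 0 < s → HasDerivAt (fun t => F t s) (F' t s) t) {q0 : ℝ} (hq : 0 < q0)
    {ν : Measure (ℝ × ℝ)} [IsFiniteMeasure ν] {Qf : ℝ × ℝ → ℝ} (hQm : Measurable Qf)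
    (hQ : ∀ᵐ w ∂ν, Qf w ∈ Icc q0 2) (t : ℝ) :
    HasDerivAt (fun t => ∫ w, F t (Qf w) ∂ν) (∫ w, F' t (Qf w) ∂ν) t := by
  obtain ⟨M, hM⟩ := h'.bdd hq t
  have hn : Icc (t - 1) (t + 1) ∈ 𝓝 t := Icc_mem_nhds (by linarith) (by linarith)
  refine (hasDerivAt_integral_of_dominated_loc_of_deriv_le (bound := fun _ => M)
    (F := fun t w => F t (Qf w)) (F' := fun t w => F' t (Qf w))
    (s := Icc (t - 1) (t + 1)) hn ?_
    (h.integrable hq hQm hQ t) (h'.integrable hq hQm hQ t).aestronglyMeasurable ?_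
    (integrable_const M) ?_).2
  · exact Eventually.of_forall fun x => (h.integrable hq hQm hQ x).aestronglyMeasurable
  · filter_upwards [hQ] with w hw x hx using hM x hx _ hw
  · filter_upwards [hQ] with w hw x hx using hd x _ (lt_of_lt_of_le hq hw.1)

lemma Cls.iter {p e : ℝ} {F : ℝ → ℝ → ℝ} (h : Cls p e F) (m : ℕ) :
    ∃ G, Cls (p + m / 2) e G ∧ ∀ (q0 : ℝ) (_ : 0 < q0)
      (ν : Measure (ℝ × ℝ)) [IsFiniteMeasure ν] (Qf : ℝ × ℝ → ℝ) (_ : Measurable Qf)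
      (_ : ∀ᵐ w ∂ν, Qf w ∈ Icc q0 2),
      iteratedDeriv m (fun t => ∫ w, F t (Qf w) ∂ν) = fun t => ∫ w, G t (Qf w) ∂ν := by
  induction m with
  | zero =>
    refine ⟨F, by simpa using h, ?_⟩
    intros; simp
  | succ m ih =>
    obtain ⟨G, hG, hi⟩ := ih
    obtain ⟨G', hG', hd⟩ := hG.derivT
    refine ⟨G', ?_, ?_⟩
    · convert hG' using 1
      push_cast; ring
    · intro q0 hq ν _ Qf hQm hQ
      rw [iteratedDeriv_succ, hi q0 hq ν Qf hQm hQ]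
      ext t
      exact (hG.hasDerivAt_integral hG' hd hq hQm hQ t).deriv

lemma sc_bound {u v : ℝ} (hu : u ∈ Icc (-1 : ℝ) 1) (hv : v ∈ Icc (-1 : ℝ) 1) (φ : ℝ) :
    (u * Real.sin (φ / 2)) ^ 2 + (v * Real.cos (φ / 2)) ^ 2 ≤ 1 := by
  have h1 : u ^ 2 ≤ 1 := by nlinarith [hu.1, hu.2]
  have h2 : v ^ 2 ≤ 1 := by nlinarith [hv.1, hv.2]
  have h3 := Real.sin_sq_add_cos_sq (φ / 2)
  nlinarith [sq_nonneg (Real.sin (φ / 2)), sq_nonneg (Real.cos (φ / 2))]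

lemma lagr (a b c d : ℝ) (h1 : a ^ 2 + b ^ 2 = 1) (h2 : c ^ 2 + d ^ 2 ≤ 1) :
    (c * b - d * a) ^ 2 ≤ 1 - (c * a + d * b) ^ 2 := by
  have : (c * b - d * a) ^ 2 + (c * a + d * b) ^ 2 = (a ^ 2 + b ^ 2) * (c ^ 2 + d ^ 2) := by ring
  rw [h1, one_mul] at this
  linarith

lemma qfun_deriv {u v : ℝ} (hu : u ∈ Icc (-1 : ℝ) 1) (hv : v ∈ Icc (-1 : ℝ) 1) (θ φ : ℝ) :
    ∃ d, HasDerivAt (fun θ => qfun θ φ u v) d θ ∧ |d| ≤ Real.sqrt (qfun θ φ u v) ∧ |d| ≤ 1 := by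
  have hs : HasDerivAt (fun t : ℝ => Real.sin (t / 2)) (Real.cos (θ / 2) / 2) θ := by
    have := (Real.hasDerivAt_sin (θ / 2)).comp θ ((hasDerivAt_id θ).div_const 2)
    simpa [Function.comp_def, div_eq_mul_inv] using this
  have hc : HasDerivAt (fun t : ℝ => Real.cos (t / 2)) (-Real.sin (θ / 2) / 2) θ := by
    have := (Real.hasDerivAt_cos (θ / 2)).comp θ ((hasDerivAt_id θ).div_const 2)
    simpa [Function.comp_def, div_eq_mul_inv] using this
  have hd := (((hs.const_mul u).mul_const (Real.sin (φ / 2))).const_sub 1).sub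
    ((hc.const_mul v).mul_const (Real.cos (φ / 2)))
  refine ⟨_, hd, ?_⟩
  have hl := lagr (Real.sin (θ / 2)) (Real.cos (θ / 2)) (u * Real.sin (φ / 2)) (v * Real.cos (φ / 2))
    (Real.sin_sq_add_cos_sq _) (sc_bound hu hv φ)
  set z := u * Real.sin (φ / 2) * Real.cos (θ / 2) - v * Real.cos (φ / 2) * Real.sin (θ / 2) with hz
  have e : -(u * (Real.cos (θ / 2) / 2) * Real.sin (φ / 2)) - v * (-Real.sin (θ / 2) / 2) * Real.cos (φ / 2) = -(z / 2) := by
    rw [hz]; ring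
  rw [e]
  have e2 : u * Real.sin (φ / 2) * Real.sin (θ / 2) + v * Real.cos (φ / 2) * Real.cos (θ / 2) = 1 - qfun θ φ u v := by
    unfold qfun; ring
  rw [e2] at hl
  constructor
  · apply Real.abs_le_sqrt
    nlinarith [sq_nonneg z, sq_nonneg (qfun θ φ u v)]
  · have : |z| ≤ 1 := abs_le_one_iff_mul_self_le_one.2 (by nlinarith [sq_nonneg (1 - qfun θ φ u v)])
    rw [abs_neg, abs_div, abs_two]; linarith

lemma qfun_le_two {u v : ℝ} (hu : u ∈ Icc (-1 : ℝ) 1) (hv : v ∈ Icc (-1 : ℝ) 1) (θ φ : ℝ) :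
    qfun θ φ u v ≤ 2 := by
  have hl := lagr (Real.sin (θ / 2)) (Real.cos (θ / 2)) (u * Real.sin (φ / 2)) (v * Real.cos (φ / 2))
    (Real.sin_sq_add_cos_sq _) (sc_bound hu hv φ)
  have e2 : u * Real.sin (φ / 2) * Real.sin (θ / 2) + v * Real.cos (φ / 2) * Real.cos (θ / 2) = 1 - qfun θ φ u v := by
    unfold qfun; ring
  rw [e2] at hl
  nlinarith [sq_nonneg (u * Real.sin (φ / 2) * Real.cos (θ / 2) - v * Real.cos (φ / 2) * Real.sin (θ / 2))]

lemma qfun_lip {u v : ℝ} (hu : u ∈ Icc (-1 : ℝ) 1) (hv : v ∈ Icc (-1 : ℝ) 1) (θ θ' φ : ℝ) :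
    |qfun θ' φ u v - qfun θ φ u v| ≤ |θ' - θ| := by
  choose d hd hd1 hd2 using fun x => qfun_deriv hu hv x φ
  have := convex_univ.norm_image_sub_le_of_norm_hasDerivWithin_le (C := 1)
    (fun x _ => (hd x).hasDerivWithinAt) (fun x _ => hd2 x) (mem_univ θ) (mem_univ θ')
  simpa using this

lemma qfun_meas (θ φ : ℝ) : Measurable (fun w : ℝ × ℝ => qfun θ φ w.1 w.2) := by
  unfold qfun; fun_prop

lemma Hker_eq (α β : ℝ) (hα : -(1 / 2) ≤ α) (hβ : -(1 / 2) ≤ β) :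
    ∃ F, Cls (α + β + 2 - 1 / 2) (1 - (α + β + 2)) F ∧
      ∀ θ ∈ Ioo (0 : ℝ) π, ∀ φ ∈ Ioo (0 : ℝ) π, θ ≠ φ →
      (fun t => Hker α β t θ φ) = fun t => ∫ w, F t (qfun θ φ w.1 w.2) ∂((PiMeasure α).prod (PiMeasure β)) := by
  have := PiMeasure_finite hα
  have := PiMeasure_finite hβ
  refine ⟨_, Cls.term _ _ ((2 : ℝ) ^ (-(α + β + 2)) / (jacobiMeasure α β (Ioo 0 π)).toReal) 1 0 (α + β + 2) ?_, ?_⟩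
  · right; push_cast; constructor <;> linarith
  intro θ hθ φ hφ hne
  ext t
  have hQ : ∀ᵐ w ∂((PiMeasure α).prod (PiMeasure β)), qfun θ φ w.1 w.2 ∈ Icc (1 - Real.cos ((θ - φ) / 2)) 2 := by
    have h1 : ∀ᵐ w ∂((PiMeasure α).prod (PiMeasure β)), w.1 ∈ Icc (-1 : ℝ) 1 :=
      Measure.quasiMeasurePreserving_fst.ae (PiMeasure_ae α)
    have h2 : ∀ᵐ w ∂((PiMeasure α).prod (PiMeasure β)), w.2 ∈ Icc (-1 : ℝ) 1 :=
      Measure.quasiMeasurePreserving_snd.ae (PiMeasure_ae β)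
    filter_upwards [h1, h2] with w hw1 hw2
    exact ⟨qfun_lb hθ hφ hw1 hw2, qfun_le_two hw1 hw2 θ φ⟩
  have hone : Cls (α + β + 2) (-(α + β + 2)) (fun t s => 1 * Real.sinh (t / 2) ^ 0 * Real.cosh (t / 2) ^ 0 * Dd t s ^ (-(α + β + 2))) :=
    Cls.term _ _ 1 0 0 (α + β + 2) (by right; push_cast; constructor <;> linarith)
  have hInt0 := hone.integrable (q0_pos hθ hφ hne) (qfun_meas θ φ) hQ t
  simp only [pow_zero, mul_one, one_mul] at hInt0
  simp only [pow_zero, mul_one, pow_one]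
  rw [integral_const_mul, integral_prod _ hInt0]
  unfold Hker
  congr 1
  have e : (fun u => ∫ v, 1 / (Real.cosh (t / 2) - 1 + qfun θ φ u v) ^ (α + β + 2) ∂(PiMeasure β)) =ᵐ[PiMeasure α]
      (fun u => ∫ v, Dd t (qfun θ φ u v) ^ (-(α + β + 2)) ∂(PiMeasure β)) := by
    filter_upwards [PiMeasure_ae α] with u hu
    apply integral_congr_ae
    filter_upwards [PiMeasure_ae β] with v hv
    have hp : 0 < qfun θ φ u v := lt_of_lt_of_le (q0_pos hθ hφ hne) (qfun_lb hθ hφ hu hv)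
    rw [Real.rpow_neg (Dd_pos hp).le, one_div]; rfl
  exact integral_congr_ae e

lemma Q_ae {α β : ℝ} (hα : -(1 / 2) ≤ α) (hβ : -(1 / 2) ≤ β) :
    ∀ᵐ w ∂((PiMeasure α).prod (PiMeasure β)), w.1 ∈ Icc (-1 : ℝ) 1 ∧ w.2 ∈ Icc (-1 : ℝ) 1 := by
  have := PiMeasure_finite hα
  have := PiMeasure_finite hβ
  have h1 : ∀ᵐ w ∂((PiMeasure α).prod (PiMeasure β)), w.1 ∈ Icc (-1 : ℝ) 1 :=
    Measure.quasiMeasurePreserving_fst.ae (PiMeasure_ae α)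
  have h2 : ∀ᵐ w ∂((PiMeasure α).prod (PiMeasure β)), w.2 ∈ Icc (-1 : ℝ) 1 :=
    Measure.quasiMeasurePreserving_snd.ae (PiMeasure_ae β)
  exact h1.and h2

open MeasureTheory Real Set Filter Topology

lemma integral_diff_le {f g : ℝ → ℝ} {μ : Measure ℝ} (hf : AEStronglyMeasurable f μ)
    (hg : AEStronglyMeasurable g μ) {B : ℝ} (hB : 0 ≤ B)
    (h : ∫⁻ t, ‖f t - g t‖ₑ ∂μ ≤ ENNReal.ofReal B) :
    ‖∫ t, f t ∂μ - ∫ t, g t ∂μ‖ ≤ B := by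
  have hi : Integrable (fun t => f t - g t) μ :=
    ⟨hf.sub hg, h.trans_lt ENNReal.ofReal_lt_top⟩
  by_cases hgi : Integrable g μ
  · have hfi : Integrable f μ := by
      have := hi.add hgi
      refine this.congr (Eventually.of_forall fun t => by simp)
    rw [← integral_sub hfi hgi]
    have := (enorm_integral_le_lintegral_enorm (fun t => f t - g t)).trans h
    rw [← ofReal_norm] at this
    exact (ENNReal.ofReal_le_ofReal_iff hB).1 this
  · have hfi : ¬ Integrable f μ := by
      intro hfi
      apply hgi
      have := hfi.sub hi
      refine this.congr (Eventually.of_forall fun t => by simp)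
    rw [integral_undef hgi, integral_undef hfi]
    simpa using hB

lemma deriv_est (α β : ℝ) (hα : -(1 / 2) ≤ α) (hβ : -(1 / 2) ≤ β)
    (k₀ k : ℕ) (hk₀ : 1 ≤ k₀) (hk : k ≤ k₀) :
    ∃ C : ℝ, 0 < C ∧ ∀ θ ∈ Ioo (0 : ℝ) π, ∀ φ ∈ Ioo (0 : ℝ) π, θ ≠ φ → ∀ L : ℝ, 0 ≤ L →
      ∫⁻ u, ∫⁻ v, ENNReal.ofReal (qfun θ φ u v ^ (-(α + β + 2))) ∂(PiMeasure β) ∂(PiMeasure α) ≤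
        ENNReal.ofReal L →
      |deriv (fun θ' => ∫ t in Ioi (0 : ℝ),
            iteratedDeriv (2 * k) (fun t' => Hker α β t' θ' φ) t * t ^ (2 * k₀ - 1)) θ| ≤ C * L := by
  have i1 := PiMeasure_finite hα
  have i2 := PiMeasure_finite hβ
  obtain ⟨F0, hF0, hH⟩ := Hker_eq α β hα hβ
  obtain ⟨F, hF, hiter⟩ := hF0.iter (2 * k)
  obtain ⟨Fs, hFs, hFsd⟩ := hF.derivS
  obtain ⟨Ft, hFt, hFtd⟩ := hF.derivT
  obtain ⟨K, hK, hbd⟩ := hFs.bound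
  set σ := α + β + 2 with hσd
  have hσ : 1 ≤ σ := by rw [hσd]; linarith
  obtain ⟨C1, hC1, hpt⟩ := pointwise hσ k₀ k hk₀ hk
  have hbd' : ∀ t s, 0 < s → |Fs t s| ≤ K * (Dd t s ^ (-(σ + 1 / 2 + k)) * (1 + Dd t s) ^ (1 / 2 + k : ℝ)) := by
    intro t s hs
    convert hbd t s hs using 4
    · push_cast; ring
    · push_cast; ring
  refine ⟨(K * C1 + 1) * (2 ^ σ / (2 * σ)), by positivity, ?_⟩
  intro θ hθ φ hφ hne L hL hInt0
  set ν := (PiMeasure α).prod (PiMeasure β) with hν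
  set q0 := 1 - Real.cos ((θ - φ) / 2) with hq0d
  have hq0 : 0 < q0 := q0_pos hθ hφ hne
  have hae := Q_ae (α := α) (β := β) hα hβ
  -- representation
  have hrep : ∀ x ∈ Ioo (0 : ℝ) π, x ≠ φ →
      iteratedDeriv (2 * k) (fun t' => Hker α β t' x φ) = fun t => ∫ w, F t (qfun x φ w.1 w.2) ∂ν := by
    intro x hx hxne
    rw [hH x hx φ hφ hxne]
    apply hiter (1 - Real.cos ((x - φ) / 2)) (q0_pos hx hφ hxne) ν (fun w => qfun x φ w.1 w.2) (qfun_meas x φ)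
    filter_upwards [hae] with w hw
    exact ⟨qfun_lb hx hφ hw.1 hw.2, qfun_le_two hw.1 hw.2 x φ⟩
  have hQx : ∀ x ∈ Ioo (0 : ℝ) π, ∀ᵐ w ∂ν, qfun x φ w.1 w.2 ∈ Icc (1 - Real.cos ((x - φ) / 2)) 2 := by
    intro x hx
    filter_upwards [hae] with w hw
    exact ⟨qfun_lb hx hφ hw.1 hw.2, qfun_le_two hw.1 hw.2 x φ⟩
  have hcont : ∀ x ∈ Ioo (0 : ℝ) π, x ≠ φ → Continuous (fun t => ∫ w, F t (qfun x φ w.1 w.2) ∂ν) := by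
    intro x hx hxne
    rw [continuous_iff_continuousAt]
    intro t
    exact (hF.hasDerivAt_integral hFt hFtd (q0_pos hx hφ hxne) (qfun_meas x φ) (hQx x hx) t).continuousAt
  -- integral of the majorant
  have hmaj : ∫⁻ t in Ioi (0 : ℝ), ∫⁻ w, ENNReal.ofReal (t * (t ^ 2 + qfun θ φ w.1 w.2 / 2) ^ (-σ - 1)) ∂ν
      ≤ ENNReal.ofReal (2 ^ σ / (2 * σ) * L) := by
    have hqm := qfun_meas θ φ
    rw [lintegral_lintegral_swap (by fun_prop)]
    calc _ ≤ ∫⁻ w, ENNReal.ofReal (2 ^ σ / (2 * σ)) * ENNReal.ofReal (qfun θ φ w.1 w.2 ^ (-σ)) ∂ν := by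
          apply lintegral_mono_ae
          filter_upwards [hQx θ hθ] with w hw
          have hp : 0 < qfun θ φ w.1 w.2 := lt_of_lt_of_le hq0 hw.1
          rw [lint_t (by linarith) (by positivity), ← ENNReal.ofReal_mul (by positivity)]
          apply ENNReal.ofReal_le_ofReal
          rw [Real.div_rpow hp.le (by norm_num), Real.rpow_neg (by norm_num : (0:ℝ) ≤ 2)]
          apply le_of_eq
          field_simp
      _ = ENNReal.ofReal (2 ^ σ / (2 * σ)) * ∫⁻ w, ENNReal.ofReal (qfun θ φ w.1 w.2 ^ (-σ)) ∂ν :=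
          lintegral_const_mul _ (by fun_prop)
      _ ≤ ENNReal.ofReal (2 ^ σ / (2 * σ)) * ENNReal.ofReal L := by
          gcongr
          rw [hν, lintegral_prod _ (by fun_prop)]
          exact hInt0
      _ = _ := by rw [← ENNReal.ofReal_mul (by positivity)]
  -- pointwise
  have hdiff : ∀ x ∈ Ioo (0 : ℝ) π, |x - θ| < q0 / 2 → ∀ t, 0 < t → ∀ w : ℝ × ℝ,
      w.1 ∈ Icc (-1 : ℝ) 1 → w.2 ∈ Icc (-1 : ℝ) 1 →
      ‖(F t (qfun x φ w.1 w.2) - F t (qfun θ φ w.1 w.2)) * t ^ (2 * k₀ - 1)‖ ≤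
        K * C1 * |x - θ| * (t * (t ^ 2 + qfun θ φ w.1 w.2 / 2) ^ (-σ - 1)) := by
    intro x hx hxθ t ht w hw1 hw2
    have hT : 0 < t ^ (2 * k₀ - 1) := by positivity
    have hqθ : q0 ≤ qfun θ φ w.1 w.2 := qfun_lb hθ hφ hw1 hw2
    have hqξ : ∀ ξ ∈ uIcc θ x, qfun θ φ w.1 w.2 / 2 ≤ qfun ξ φ w.1 w.2 := by
      intro ξ hξ
      have h1 : |ξ - θ| ≤ |x - θ| := abs_sub_left_of_mem_uIcc hξ
      have h2 := (abs_le.1 (qfun_lip hw1 hw2 θ ξ φ)).1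
      linarith
    choose d hd hd1 hd2 using fun y => qfun_deriv hw1 hw2 y φ
    have := (convex_uIcc θ x).norm_image_sub_le_of_norm_hasDerivWithin_le
      (f := fun y => F t (qfun y φ w.1 w.2)) (f' := fun y => Fs t (qfun y φ w.1 w.2) * d y)
      (C := K * C1 * (t * (t ^ 2 + qfun θ φ w.1 w.2 / 2) ^ (-σ - 1)) / t ^ (2 * k₀ - 1))
      (fun y hy => ((hFsd t (qfun y φ w.1 w.2) (by linarith [hqξ y hy])).comp y (hd y)).hasDerivWithinAt)
      (fun y hy => by
        have hyq := hqξ y hy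
        have hyp : 0 < qfun y φ w.1 w.2 := by linarith
        have hy2 := qfun_le_two hw1 hw2 y φ
        rw [le_div_iff₀ hT, norm_mul, Real.norm_eq_abs, Real.norm_eq_abs]
        have hDp := Dd_pos (t := t) hyp
        calc |Fs t (qfun y φ w.1 w.2)| * |d y| * t ^ (2 * k₀ - 1)
            ≤ (K * (Dd t (qfun y φ w.1 w.2) ^ (-(σ + 1 / 2 + k)) * (1 + Dd t (qfun y φ w.1 w.2)) ^ (1 / 2 + k : ℝ)))
              * Real.sqrt (qfun y φ w.1 w.2) * t ^ (2 * k₀ - 1) := by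
              gcongr
              · exact hbd' t _ hyp
              · exact hd1 y
          _ = K * (Dd t (qfun y φ w.1 w.2) ^ (-(σ + 1 / 2 + k)) * (1 + Dd t (qfun y φ w.1 w.2)) ^ (1 / 2 + k : ℝ)
              * Real.sqrt (qfun y φ w.1 w.2) * t ^ (2 * k₀ - 1)) := by ring
          _ ≤ K * (C1 * (t * (t ^ 2 + qfun y φ w.1 w.2) ^ (-σ - 1))) := by
              exact mul_le_mul_of_nonneg_left (hpt t _ ht hyp hy2) hK
          _ ≤ K * (C1 * (t * (t ^ 2 + qfun θ φ w.1 w.2 / 2) ^ (-σ - 1))) := by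
              gcongr K * (C1 * (t * ?_))
              apply Real.rpow_le_rpow_of_nonpos _ (by linarith) (by linarith)
              have : 0 < t ^ 2 := by positivity
              linarith
          _ = _ := by ring)
      left_mem_uIcc right_mem_uIcc
    rw [norm_mul, Real.norm_of_nonneg hT.le]
    calc _ ≤ _ := mul_le_mul_of_nonneg_right this hT.le
      _ = _ := by rw [Real.norm_eq_abs]; field_simp
  have hmem : ∀ᶠ x in 𝓝 θ, x ∈ Ioo (0 : ℝ) π ∧ x ≠ φ ∧ |x - θ| < q0 / 2 := by
    have hA : ∀ᶠ x in 𝓝 θ, x ∈ Ioo (0 : ℝ) π := Ioo_mem_nhds hθ.1 hθ.2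
    have hB : ∀ᶠ x in 𝓝 θ, x ≠ φ := isOpen_ne.mem_nhds hne
    filter_upwards [hA, hB, Metric.ball_mem_nhds θ (half_pos hq0)] with x h1 h2 h3
    exact ⟨h1, h2, by rwa [Metric.mem_ball, Real.dist_eq] at h3⟩
  rw [← Real.norm_eq_abs]
  apply norm_deriv_le_of_lip' (by positivity)
  filter_upwards [hmem] with x ⟨hx, hxne, hxθ⟩
  rw [hrep x hx hxne, hrep θ hθ hne]
  have hc1 := hcont x hx hxne
  have hc2 := hcont θ hθ hne
  apply integral_diff_le
  · exact (by fun_prop : Continuous _).aestronglyMeasurable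
  · exact (by fun_prop : Continuous _).aestronglyMeasurable
  · positivity
  · have hqm := qfun_meas θ φ
    calc _ ≤ ∫⁻ t in Ioi (0 : ℝ), ENNReal.ofReal ((K * C1 + 1) * |x - θ|) *
            ∫⁻ w, ENNReal.ofReal (t * (t ^ 2 + qfun θ φ w.1 w.2 / 2) ^ (-σ - 1)) ∂ν := by
          apply setLIntegral_mono' measurableSet_Ioi
          intro t ht
          have ht' : 0 < t := ht
          have hI1 := hF.integrable (q0_pos hx hφ hxne) (qfun_meas x φ) (hQx x hx) t
          have hI2 := hF.integrable (q0_pos hθ hφ hne) (qfun_meas θ φ) (hQx θ hθ) t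
          rw [← sub_mul, ← integral_sub hI1 hI2, ← integral_mul_const]
          refine (enorm_integral_le_lintegral_enorm _).trans ?_
          rw [← lintegral_const_mul _ (by fun_prop)]
          apply lintegral_mono_ae
          filter_upwards [hae] with w hw
          rw [← ENNReal.ofReal_mul (by positivity), ← ofReal_norm]
          apply ENNReal.ofReal_le_ofReal
          refine (hdiff x hx hxθ t ht' w hw.1 hw.2).trans ?_
          have hp : 0 ≤ qfun θ φ w.1 w.2 := hq0.le.trans (qfun_lb hθ hφ hw.1 hw.2)
          gcongr
          linarith
      _ = ENNReal.ofReal ((K * C1 + 1) * |x - θ|) * ∫⁻ t in Ioi (0 : ℝ),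
            ∫⁻ w, ENNReal.ofReal (t * (t ^ 2 + qfun θ φ w.1 w.2 / 2) ^ (-σ - 1)) ∂ν := by
          apply lintegral_const_mul
          apply Measurable.lintegral_prod_right (f := fun t w => ENNReal.ofReal (t * (t ^ 2 + qfun θ φ (Prod.fst w) (Prod.snd w) / 2) ^ (-σ - 1)))
          fun_prop
      _ ≤ ENNReal.ofReal ((K * C1 + 1) * |x - θ|) * ENNReal.ofReal (2 ^ σ / (2 * σ) * L) := by gcongr
      _ = _ := by
          rw [← ENNReal.ofReal_mul (by positivity), Real.norm_eq_abs]
          congr 1; ring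

lemma Hker_symm (α β t θ φ : ℝ) : Hker α β t θ φ = Hker α β t φ θ := by
  unfold Hker
  simp only [qfun_symm θ φ]

/-- gradient estimate for the kernels `S_k^{α,β}`. -/
theorem Sk_gradient (α β : ℝ) (hα : -(1 / 2) ≤ α) (hβ : -(1 / 2) ≤ β)
    (k₀ k : ℕ) (hk₀ : 1 ≤ k₀) (hk : k ≤ k₀) (hcrit : α + β = -1 → 1 ≤ k) :
    ∃ C : ℝ, 0 < C ∧
      ∀ θ ∈ Ioo (0 : ℝ) π, ∀ φ ∈ Ioo (0 : ℝ) π, θ ≠ φ →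
        |deriv (fun θ' => ∫ t in Ioi (0 : ℝ),
            iteratedDeriv (2 * k) (fun t' => Hker α β t' θ' φ) t * t ^ (2 * k₀ - 1)) θ| +
        |deriv (fun φ' => ∫ t in Ioi (0 : ℝ),
            iteratedDeriv (2 * k) (fun t' => Hker α β t' θ φ') t * t ^ (2 * k₀ - 1)) φ|
          ≤ C / (|θ - φ| * (jacobiMeasure α β (jacobiBall θ |θ - φ|)).toReal) := by
  obtain ⟨C, hC, h⟩ := deriv_est α β hα hβ k₀ k hk₀ hk
  obtain ⟨K, hK, hd⟩ := double_est hα hβ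
  refine ⟨2 * C * K, by positivity, fun θ hθ φ hφ hne => ?_⟩
  have h1 := hd θ hθ φ hφ hne
  set L := K / (|θ - φ| * (jacobiMeasure α β (jacobiBall θ |θ - φ|)).toReal) with hL
  have hL0 : 0 ≤ L := by positivity
  have a1 := h θ hθ φ hφ hne L hL0 h1
  simp only [qfun_symm θ φ] at h1
  have a2 := h φ hφ θ hθ hne.symm L hL0 h1
  simp only [Hker_symm α β _ θ]
  have e : 2 * C * K / (|θ - φ| * (jacobiMeasure α β (jacobiBall θ |θ - φ|)).toReal)
      = C * L + C * L := by rw [hL]; ring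
  rw [e]
  exact add_le_add a1 a2
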